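/- Let τ > 0 and f : [0, τ] → ℝ be continuous with a flat boundary y(k) ≡ y₀. Then lim_{x → y₀⁺} ∫_0^τ f(k)·(x − y₀)/(2√(π(τ−k)³))·exp(−(x − y₀)²/(4(τ−k))) dk = f(τ), i.e., the double-layer heat potential with constant boundary has jump value equal to the density at time τ as x approaches the boundary from above. -/

import Mathlib

open Real Filter

open MeasureTheory Set Topology

/-!
As a function of the elapsed time `t`, the double-layer heat kernel at distance `h` from the
boundary is a probability density on `(0, ∞)`: the substitution `a = t ^ (-1 / 2)` turns it into
a Gaussian on a half-line. By parabolic scaling it concentrates at `t = 0` as `h → 0⁺`, so it is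
an approximate identity there, and it reproduces the limit of the density at the final time.
-/

/-- The double-layer heat kernel at distance `h` from the boundary after a time `t`, the kernel of
the double-layer potential: `-2` times the `h`-derivative of the heat kernel
`exp (-h ^ 2 / (4 * t)) / √(4 * π * t)`. It vanishes for `t ≤ 0`, since `√` is then `0` and so is
the quotient. -/
noncomputable def doubleLayerKernel (h t : ℝ) : ℝ :=
  h / (2 * √(π * t ^ 3)) * exp (-h ^ 2 / (4 * t))

namespace doubleLayerKernel

variable {h t δ T : ℝ}

lemma nonneg (hh : 0 ≤ h) (t : ℝ) : 0 ≤ doubleLayerKernel h t := by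
  unfold doubleLayerKernel
  positivity

lemma measurable (h : ℝ) : Measurable (doubleLayerKernel h) := by
  unfold doubleLayerKernel
  fun_prop

lemma apply_le_of_le (hh : 0 ≤ h) (hδ : 0 < δ) (hδt : δ ≤ t) :
    doubleLayerKernel h t ≤ h / (2 * √(π * δ ^ 3)) := by
  have ht : 0 < t := hδ.trans_le hδt
  have hexp : exp (-h ^ 2 / (4 * t)) ≤ 1 :=
    exp_le_one_iff.2 (div_nonpos_of_nonpos_of_nonneg (by simp [sq_nonneg]) (by positivity))
  calc doubleLayerKernel h t ≤ h / (2 * √(π * t ^ 3)) :=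
        mul_le_of_le_one_right (by positivity) hexp
    _ ≤ h / (2 * √(π * δ ^ 3)) := by gcongr

lemma tendstoUniformlyOn_zero (hδ : 0 < δ) :
    TendstoUniformlyOn doubleLayerKernel 0 (𝓝[>] 0) (Ici δ) := by
  have hbound : Tendsto (fun h : ℝ ↦ h / (2 * √(π * δ ^ 3))) (𝓝[>] 0) (𝓝 0) :=
    ((continuous_id.div_const _).tendsto' 0 0 (zero_div _)).mono_left nhdsWithin_le_nhds
  rw [Metric.tendstoUniformlyOn_iff]
  intro ε hε
  filter_upwards [hbound.eventually_lt_const hε, self_mem_nhdsWithin] with h hlt hpos t ht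
  have hh : 0 ≤ h := le_of_lt hpos
  rw [Pi.zero_apply, dist_zero_left, norm_of_nonneg (nonneg hh t)]
  exact (apply_le_of_le hh hδ ht).trans_lt hlt

-- The scalar factor is the Jacobian of the substitution `a = t ^ (-1 / 2)`.
lemma eq_rpow_smul_gaussian (ht : 0 < t) (h : ℝ) :
    doubleLayerKernel h t =
      (|(-1 / 2 : ℝ)| * t ^ (-1 / 2 - 1 : ℝ)) •
        (h / √π * exp (-(h ^ 2 / 4) * (t ^ (-1 / 2 : ℝ)) ^ 2)) := by
  have hsq : (t ^ (-1 / 2 : ℝ)) ^ 2 = t⁻¹ := by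
    rw [← rpow_natCast, ← rpow_mul ht.le, ← rpow_neg_one]
    norm_num
  have hsqrt : √(t ^ 3) = t ^ (3 / 2 : ℝ) := by
    rw [sqrt_eq_rpow, ← rpow_natCast, ← rpow_mul ht.le]
    norm_num
  have hrpow : t ^ (-1 / 2 - 1 : ℝ) = (t ^ (3 / 2 : ℝ))⁻¹ := by
    rw [← rpow_neg ht.le]
    norm_num
  have hexp : -h ^ 2 / (4 * t) = -(h ^ 2 / 4) * t⁻¹ := by ring
  have habs : |(-1 / 2 : ℝ)| = 1 / 2 := by norm_num [abs_of_neg]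
  rw [doubleLayerKernel, sqrt_mul pi_pos.le, hsqrt, hrpow, hsq, hexp, habs, smul_eq_mul]
  ring

lemma integrableOn_Ioi (hh : 0 < h) : IntegrableOn (doubleLayerKernel h) (Ioi 0) := by
  have hgauss : IntegrableOn (fun a : ℝ ↦ h / √π * exp (-(h ^ 2 / 4) * a ^ 2)) (Ioi 0) :=
    ((integrable_exp_neg_mul_sq (by positivity)).const_mul _).integrableOn
  refine ((integrableOn_Ioi_comp_rpow_iff _ (p := -1 / 2) (by norm_num)).2 hgauss).congr_fun
    (fun t ht ↦ ?_) measurableSet_Ioi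
  exact (eq_rpow_smul_gaussian ht h).symm

lemma integral_Ioi (hh : 0 < h) : ∫ t in Ioi 0, doubleLayerKernel h t = 1 := by
  have hsqrt : √(π / (h ^ 2 / 4)) = 2 * √π / h := by
    rw [sqrt_div pi_pos.le, show h ^ 2 / 4 = (h / 2) ^ 2 by ring, sqrt_sq (by positivity)]
    field_simp
  calc ∫ t in Ioi 0, doubleLayerKernel h t
      = ∫ a in Ioi 0, h / √π * exp (-(h ^ 2 / 4) * a ^ 2) := by
        rw [← integral_comp_rpow_Ioi (fun a ↦ h / √π * exp (-(h ^ 2 / 4) * a ^ 2))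
          (p := -1 / 2) (by norm_num)]
        exact setIntegral_congr_fun measurableSet_Ioi fun t ht ↦ eq_rpow_smul_gaussian ht h
    _ = 1 := by
        rw [integral_const_mul, integral_gaussian_Ioi, hsqrt]
        field_simp

lemma parabolic_scaling (hh : 0 < h) (t : ℝ) :
    h ^ 2 * doubleLayerKernel h (h ^ 2 * t) = doubleLayerKernel 1 t := by
  have hsqrt : √(π * (h ^ 2 * t) ^ 3) = h ^ 3 * √(π * t ^ 3) := by
    rw [show π * (h ^ 2 * t) ^ 3 = (h ^ 3) ^ 2 * (π * t ^ 3) by ring, sqrt_mul (by positivity),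
      sqrt_sq (by positivity)]
  have hexp : -h ^ 2 / (4 * (h ^ 2 * t)) = -1 ^ 2 / (4 * t) := by
    field_simp
  rw [doubleLayerKernel, doubleLayerKernel, hsqrt, hexp]
  field_simp

lemma intervalIntegral_eq_intervalIntegral_one (hh : 0 < h) (T : ℝ) :
    ∫ t in 0..T, doubleLayerKernel h t = ∫ t in 0..T / h ^ 2, doubleLayerKernel 1 t := by
  have hcancel : h ^ 2 * (T / h ^ 2) = T := mul_div_cancel₀ T (by positivity)
  simp_rw [← parabolic_scaling hh]
  rw [intervalIntegral.integral_const_mul, ← smul_eq_mul,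
    intervalIntegral.smul_integral_comp_mul_left, mul_zero, hcancel]

lemma tendsto_intervalIntegral (hT : 0 < T) :
    Tendsto (fun h ↦ ∫ t in 0..T, doubleLayerKernel h t) (𝓝[>] 0) (𝓝 1) := by
  have hscale : Tendsto (fun h : ℝ ↦ T / h ^ 2) (𝓝[>] 0) atTop := by
    have hinv := (tendsto_pow_atTop two_ne_zero).comp (tendsto_inv_nhdsGT_zero (𝕜 := ℝ))
    simpa only [Function.comp_def, inv_pow, ← div_eq_mul_inv] using hinv.const_mul_atTop hT
  rw [← integral_Ioi one_pos]
  refine (intervalIntegral_tendsto_integral_Ioi 0 (integrableOn_Ioi one_pos) hscale).congr' ?_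
  filter_upwards [self_mem_nhdsWithin] with h hh
  exact (intervalIntegral_eq_intervalIntegral_one hh T).symm

variable {E : Type*} [NormedAddCommGroup E] [NormedSpace ℝ E] [CompleteSpace E]

theorem tendsto_intervalIntegral_smul {g : ℝ → E} {a : E} (hT : 0 < T)
    (hg : IntervalIntegrable g volume 0 T) (hlim : Tendsto g (𝓝[>] 0) (𝓝 a)) :
    Tendsto (fun h ↦ ∫ t in 0..T, doubleLayerKernel h t • g t) (𝓝[>] 0) (𝓝 a) := by
  have hunif (u : Set ℝ) (hu : IsOpen u) (h0 : 0 ∈ u) :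
      TendstoUniformlyOn doubleLayerKernel 0 (𝓝[>] 0) (Ioc 0 T \ u) := by
    obtain ⟨δ, hδ, hball⟩ := Metric.isOpen_iff.1 hu 0 h0
    refine (tendstoUniformlyOn_zero hδ).mono fun t ⟨ht, htu⟩ ↦ ?_
    by_contra hlt
    exact htu (hball (by simpa [abs_of_pos ht.1] using hlt))
  have hmass := tendsto_intervalIntegral hT
  simp only [intervalIntegral.integral_of_le hT.le] at hmass ⊢
  refine tendsto_setIntegral_peak_smul_of_integrableOn_of_tendsto measurableSet_Ioc
    measurableSet_Ioc Subset.rfl self_mem_nhdsWithin measure_Ioc_lt_top.ne ?_ hunif hmass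
    (.of_forall fun h ↦ (measurable h).aestronglyMeasurable)
    ((intervalIntegrable_iff_integrableOn_Ioc_of_le hT.le).1 hg)
    (hlim.mono_left (nhdsWithin_mono 0 Ioc_subset_Ioi_self))
  filter_upwards [self_mem_nhdsWithin] with h hh t _
  exact nonneg (le_of_lt hh) t

end doubleLayerKernel

theorem stmt_19_general {E : Type*} [NormedAddCommGroup E] [NormedSpace ℝ E] [CompleteSpace E]
    {t₀ τ : ℝ} (y₀ : ℝ) (hτ : t₀ < τ) {f : ℝ → E} {a : E}
    (hf : IntervalIntegrable f volume t₀ τ) (hlim : Tendsto f (𝓝[<] τ) (𝓝 a)) :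
    Tendsto (fun x ↦ ∫ k in t₀..τ, doubleLayerKernel (x - y₀) (τ - k) • f k)
      (𝓝[>] y₀) (𝓝 a) := by
  have hreverse : Tendsto (fun t ↦ τ - t) (𝓝[>] 0) (𝓝[<] τ) := by
    have hcont : ContinuousWithinAt (fun t ↦ τ - t) (Ioi 0) 0 := by fun_prop
    simpa only [sub_zero] using hcont.tendsto_nhdsWithin (t := Iio τ) fun t ht ↦ sub_lt_self τ ht
  have hdist : Tendsto (fun x ↦ x - y₀) (𝓝[>] y₀) (𝓝[>] 0) := by
    have hcont : ContinuousWithinAt (fun x ↦ x - y₀) (Ioi y₀) y₀ := by fun_prop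
    simpa only [sub_self] using hcont.tendsto_nhdsWithin (t := Ioi 0) fun x hx ↦ sub_pos.2 hx
  have hf' : IntervalIntegrable (fun t ↦ f (τ - t)) volume 0 (τ - t₀) := by
    simpa using (hf.comp_sub_left τ).symm
  have hpeak := doubleLayerKernel.tendsto_intervalIntegral_smul (sub_pos.2 hτ) hf'
    (hlim.comp hreverse)
  refine (hpeak.comp hdist).congr fun x ↦ ?_
  simpa using (intervalIntegral.integral_comp_sub_left
    (fun t ↦ doubleLayerKernel (x - y₀) t • f (τ - t)) τ (a := t₀) (b := τ)).symm

theorem stmt_19 (τ y₀ : ℝ) (hτ : 0 < τ) (f : ℝ → ℝ) (hf : ContinuousOn f (Set.Icc 0 τ)) :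
    Tendsto (fun x : ℝ => ∫ k in (0:ℝ)..τ,
        f k * (x - y₀) / (2 * Real.sqrt (π * (τ - k) ^ 3))
          * Real.exp (-(x - y₀) ^ 2 / (4 * (τ - k))))
      (nhdsWithin y₀ (Set.Ioi y₀)) (nhds (f τ)) := by
  have hlim : Tendsto f (𝓝[<] τ) (𝓝 (f τ)) :=
    (hf.continuousWithinAt (right_mem_Icc.2 hτ.le)).mono_of_mem_nhdsWithin (Icc_mem_nhdsLT hτ)
  convert stmt_19_general y₀ hτ (hf.intervalIntegrable_of_Icc hτ.le) hlim using 4 with x k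
  rw [doubleLayerKernel, smul_eq_mul]
  ring
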